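/- Let n ≥ 1 be an integer, Ω ⊂ ℝⁿ a bounded open set, T > 0, x₀ ∈ ℝⁿ \ cl(Ω), β ∈ (0,1), C₀ > 0, ψ(x,t) = |x−x₀|² − βt² + C₀, and let α ∈ (2β/(β+n), 2/(β+n)). Then there exist λ₀ > 0 and c > 0 such that for all λ ≥ λ₀ and all (x,t) ∈ Ω × (−T,T), setting X = |∂ₜψ(x,t)|² − |∇ψ(x,t)|² = 4β²t² − 4|x−x₀|², one has 2λX² + (2∂ₜ²ψ + α(∂ₜ²ψ − Δψ))X + 16(1−β)|x−x₀|² ≥ c, where 2∂ₜ²ψ + α(∂ₜ²ψ − Δψ) = −4β − 2α(β+n). -/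

import Mathlib

open MeasureTheory Real Set
open scoped RealInnerProductSpace

/-- The Laplacian of a real-valued function on Euclidean space. -/
noncomputable def lap {n : ℕ} (f : EuclideanSpace ℝ (Fin n) → ℝ) (x : EuclideanSpace ℝ (Fin n)) : ℝ :=
  ∑ i : Fin n, fderiv ℝ (fun y => fderiv ℝ f y (EuclideanSpace.single i 1)) x (EuclideanSpace.single i 1)

/-- The weight `ψ(x,t) = |x - x₀|² - β t² + C₀`. -/
noncomputable def psi {n : ℕ} (x₀ : EuclideanSpace ℝ (Fin n)) (β C₀ : ℝ)
    (x : EuclideanSpace ℝ (Fin n)) (t : ℝ) : ℝ :=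
  ‖x - x₀‖ ^ 2 - β * t ^ 2 + C₀

/-- The Carleman weight `φ = e^{λψ}`. -/
noncomputable def phi {n : ℕ} (x₀ : EuclideanSpace ℝ (Fin n)) (β C₀ l : ℝ)
    (x : EuclideanSpace ℝ (Fin n)) (t : ℝ) : ℝ :=
  Real.exp (l * psi x₀ β C₀ x t)


/-- **Positivity of the zeroth-order coefficient `F_λ(ψ)`** (inequality (2.12)):
for `α ∈ (2β/(β+n), 2/(β+n))`, there are `λ₀ > 0` and `c > 0` such that for all `λ ≥ λ₀` and all
`(x,t) ∈ Ω × (-T,T)`, with `X = 4β²t² - 4|x-x₀|²`,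
`2λX² + (-4β - 2α(β+n))X + 16(1-β)|x-x₀|² ≥ c`. -/
theorem pseudoconvexity_positivity
    (n : ℕ) (hn : 1 ≤ n)
    (Ω : Set (EuclideanSpace ℝ (Fin n))) (hΩo : IsOpen Ω) (hΩb : Bornology.IsBounded Ω)
    (T : ℝ) (hT : 0 < T)
    (x₀ : EuclideanSpace ℝ (Fin n)) (hx₀ : x₀ ∉ closure Ω)
    (β : ℝ) (hβ : β ∈ Set.Ioo (0:ℝ) 1) (C₀ : ℝ) (hC₀ : 0 < C₀)
    (α : ℝ) (hα₁ : 2 * β / (β + n) < α) (hα₂ : α < 2 / (β + n)) :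
    ∃ l₀ > (0:ℝ), ∃ c > (0:ℝ), ∀ l ≥ l₀, ∀ x ∈ Ω, ∀ t ∈ Set.Ioo (-T) T,
      c ≤ 2 * l * (4 * β ^ 2 * t ^ 2 - 4 * ‖x - x₀‖ ^ 2) ^ 2
          + (-4 * β - 2 * α * (β + n)) * (4 * β ^ 2 * t ^ 2 - 4 * ‖x - x₀‖ ^ 2)
          + 16 * (1 - β) * ‖x - x₀‖ ^ 2 := by
  obtain ⟨hβ0, hβ1⟩ := hβ
  have hnb : x₀ ∈ (closure Ω)ᶜ := hx₀
  obtain ⟨δ, hδ, hball⟩ := Metric.isOpen_iff.1 isClosed_closure.isOpen_compl x₀ hnb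
  have hb1 : 0 < 1 - β := by linarith
  generalize hb : (-4 * β - 2 * α * (β + n)) = b
  obtain ⟨m, hm⟩ : ∃ m, m = 16 * (1 - β) * δ ^ 2 := ⟨_, rfl⟩
  have hm0 : 0 < m := by rw [hm]; positivity
  refine ⟨(b ^ 2 + 1) / (4 * m), by positivity, m / 2, by positivity, ?_⟩
  intro l hl x hx t _
  have hd : δ ≤ ‖x - x₀‖ := by
    by_contra hlt
    rw [not_le] at hlt
    have h1 : x ∈ Metric.ball x₀ δ := by rwa [Metric.mem_ball, dist_eq_norm]
    exact hball h1 (subset_closure hx)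
  have hD : m ≤ 16 * (1 - β) * ‖x - x₀‖ ^ 2 := by
    rw [hm]; gcongr
  generalize (4 * β ^ 2 * t ^ 2 - 4 * ‖x - x₀‖ ^ 2) = X
  have h2 : 2 * ((b ^ 2 + 1) / (4 * m)) * X ^ 2 ≤ 2 * l * X ^ 2 := by
    gcongr
  have h3 : 2 * ((b ^ 2 + 1) / (4 * m)) * X ^ 2 + b * X + m / 2
      = ((b * X + m) ^ 2 + X ^ 2) / (2 * m) := by
    field_simp
    ring
  have h4 : 0 ≤ ((b * X + m) ^ 2 + X ^ 2) / (2 * m) := by positivity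
  linarith
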